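/- arXiv:1911.01841 — 3 statements merged into one kernel-verified Lean document; each statement's English description precedes it below -/
import Mathlib

section
/- Let l ≥ 1 players each have strategy space ℝⁿ (EuclideanSpace ℝ (Fin n)). For each player i ∈ Fin l, let A i ⊆ ℝⁿ be a nonempty, convex, compact set of admissible strategies, let fᵢ : (Fin l → ℝⁿ) → ℝ be continuous, and let qᵢ : ℝⁿ → ℝ be convex and continuous. Assume that for every admissible strategy profile x ∈ ∏ᵢ A i and every player i, the function xᵢ ↦ fᵢ(x with its i-th component replaced by xᵢ) is convex on A i. Then there exists a Nash equilibrium, i.e. a profile x̄ with x̄ i ∈ A i for every i such that for every i and every xᵢ ∈ A i one has fᵢ(x̄) + qᵢ(x̄ i) ≤ fᵢ(x̄ with i-th component replaced by xᵢ) + qᵢ(xᵢ). -/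
open Finset in
theorem aux_door (n : ℕ) (g : ℕ → ℕ) (hg : ∀ j ≤ n + 1, g j ≤ n + 1) :
    (∑ k ∈ range (n + 2), if (∀ c ≤ n, ∃ j ≤ n + 1, j ≠ k ∧ g j = c) then (1 : ZMod 2) else 0)
      = if (∀ c ≤ n + 1, ∃ j ≤ n + 1, g j = c) then 1 else 0 := by
  classical
  have key : ∀ a ≤ n + 1, ∀ b ≤ n + 1, a ≠ b →
      ¬ (∀ c ≤ n, ∃ j ≤ n + 1, j ≠ a ∧ j ≠ b ∧ g j = c) := by
    intro a ha b hb hab h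
    have hsub : range (n + 1) ⊆ (((range (n + 2)).erase a).erase b).image g := by
      intro c hc
      obtain ⟨j, hj, h1, h2, h3⟩ := h c (by simpa [Nat.lt_succ_iff] using hc)
      simp only [mem_image, mem_erase, mem_range]
      exact ⟨j, ⟨h2, h1, by omega⟩, h3⟩
    have := (card_le_card hsub).trans card_image_le
    rw [card_erase_of_mem (by simp [hab.symm]; omega),
      card_erase_of_mem (by simp; omega)] at this
    simp at this
  split_ifs with hfull
  · obtain ⟨j0, hj0, hgj0⟩ := hfull (n + 1) le_rfl
    rw [sum_eq_single j0]
    · rw [if_pos]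
      intro c hc
      obtain ⟨j, hj, rfl⟩ := hfull c (by omega)
      exact ⟨j, hj, by rintro rfl; omega, rfl⟩
    · intro b hb hne
      rw [if_neg]
      intro h
      refine key b (by simp at hb; omega) j0 hj0 hne ?_
      intro c hc
      obtain ⟨j, hj, h1, h2⟩ := h c hc
      exact ⟨j, hj, h1, by rintro rfl; omega, h2⟩
    · intro h; simp at h; omega
  · by_cases hc : ∀ c ≤ n, ∃ j ≤ n + 1, g j = c
    · have hno : ∀ j ≤ n + 1, g j ≤ n := by
        intro j hj
        by_contra hcon
        apply hfull
        intro c hc'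
        rcases Nat.lt_or_ge n c with h | h
        · exact ⟨j, hj, by have := hg j hj; omega⟩
        · exact hc c h
      obtain ⟨a, ha, b, hb, hab, hgab⟩ := exists_ne_map_eq_of_card_lt_of_maps_to
        (s := range (n + 2)) (t := range (n + 1)) (f := g) (by simp)
        (by intro j hj; simp at hj ⊢; have := hno j (by omega); omega)
      simp only [mem_range] at ha hb
      rw [← sum_subset (s₁ := {a, b})]
      · rw [sum_pair hab, if_pos, if_pos]
        · decide
        · intro c hc'
          obtain ⟨j, hj, rfl⟩ := hc c hc'
          by_cases h : j = b
          · exact ⟨a, by omega, hab, by rw [h, hgab]⟩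
          · exact ⟨j, hj, h, rfl⟩
        · intro c hc'
          obtain ⟨j, hj, rfl⟩ := hc c hc'
          by_cases h : j = a
          · exact ⟨b, by omega, hab.symm, by rw [h, hgab]⟩
          · exact ⟨j, hj, h, rfl⟩
      · intro x hx
        simp at hx ⊢
        omega
      · intro k hk hkn
        simp at hk hkn
        rw [if_neg]
        intro h
        refine key k (by omega) a (by omega) hkn.1 ?_
        intro c hc'
        obtain ⟨j, hj, h1, h2⟩ := h c hc'
        by_cases h : j = a
        · exact ⟨b, by omega, fun h => hkn.2 h.symm, hab.symm, by rw [← h2, h, hgab]⟩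
        · exact ⟨j, hj, h1, h, h2⟩
    · apply sum_eq_zero
      intro k _
      rw [if_neg]
      intro h
      apply hc
      intro c hc'
      obtain ⟨j, hj, _, h2⟩ := h c hc'
      exact ⟨j, hj, h2⟩

def auxVx {n : ℕ} (v : Fin n → ℕ) (σ : Equiv.Perm (Fin n)) (k : ℕ) : Fin n → ℕ :=
  fun i => v i + if k ≤ (σ i : ℕ) then 1 else 0

theorem auxVx_swap {n : ℕ} (v : Fin (n + 1) → ℕ) (σ : Equiv.Perm (Fin (n + 1))) (j : Fin n)
    (m : ℕ) (hm : m ≠ j + 1) :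
    auxVx v (Equiv.swap j.castSucc j.succ * σ) m = auxVx v σ m := by
  funext i
  simp only [auxVx, Equiv.Perm.mul_apply, Equiv.swap_apply_def]
  congr 1
  split_ifs with h1 h2 h3 h4 h5 h6 <;> simp_all [Fin.ext_iff] <;> omega

open Finset in
theorem aux_mid {n : ℕ} (l : (Fin (n + 1) → ℕ) → ℕ) (v : Fin (n + 1) → ℕ) (k : ℕ) (hk : k < n) :
    (∑ σ : Equiv.Perm (Fin (n + 1)),
      if (∀ c ≤ n, ∃ j ≤ n + 1, j ≠ k + 1 ∧ l (auxVx v σ j) = c) then (1 : ZMod 2) else 0) = 0 := by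
  classical
  have hE : ∀ σ : Equiv.Perm (Fin (n + 1)),
    (∀ c ≤ n, ∃ j ≤ n + 1, j ≠ k + 1 ∧
      l (auxVx v (Equiv.swap (⟨k, hk⟩ : Fin n).castSucc (⟨k, hk⟩ : Fin n).succ * σ) j) = c) ↔
    (∀ c ≤ n, ∃ j ≤ n + 1, j ≠ k + 1 ∧ l (auxVx v σ j) = c) := by
    intro σ
    refine forall₂_congr fun c _ => exists_congr fun j => and_congr_right fun _ =>
      and_congr_right fun hj => ?_
    rw [auxVx_swap v σ ⟨k, hk⟩ j hj]
  refine sum_involution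
    (fun σ _ => Equiv.swap (⟨k, hk⟩ : Fin n).castSucc (⟨k, hk⟩ : Fin n).succ * σ) ?_ ?_ ?_ ?_
  · intro σ _
    simp only [hE]
    split_ifs
    · decide
    · simp
  · intro σ _ _ h
    have h2 := mul_eq_right.mp h
    rw [Equiv.swap_eq_one_iff] at h2
    simp [Fin.ext_iff] at h2
  · simp
  · intro σ _
    simp

theorem auxVx_rot {n : ℕ} (v : Fin (n + 1) → ℕ) (σ : Equiv.Perm (Fin (n + 1)))
    (m : ℕ) (hm : m ≤ n) :
    auxVx (v + Pi.single (σ.symm 0) 1) σ (m + 1) = auxVx v ((finRotate (n + 1)).symm * σ) m := by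
  funext i
  obtain ⟨τ, rfl⟩ : ∃ τ, σ = finRotate (n + 1) * τ := ⟨(finRotate (n + 1)).symm * σ, by
    ext; simp⟩
  have hs : (finRotate (n + 1) * τ).symm 0 = τ.symm (Fin.last n) := by
    rw [Equiv.symm_apply_eq]; simp
  rw [hs]
  have hr : (finRotate (n + 1)).symm * (finRotate (n + 1) * τ) = τ := by
    ext; simp
  rw [hr]
  simp only [auxVx, Pi.add_apply, Pi.single_apply, Equiv.Perm.mul_apply]
  by_cases h : i = τ.symm (Fin.last n)
  · subst h
    simp [hm]
  · have : (τ i) ≠ Fin.last n := fun h' => h (by rw [← h']; simp)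
    have e := coe_finRotate_of_ne_last this
    rw [finRotate_apply] at e
    simp [h, e, Nat.lt_succ_iff]

open Finset in
theorem aux_tele {d : ℕ} (N : ℕ) (F : (Fin d → ℕ) → ZMod 2) (i : Fin d)
    (hF : ∀ v, v i = N → F v = 0) :
    (∑ v ∈ Fintype.piFinset (fun _ : Fin d => range N), F v) +
      (∑ v ∈ Fintype.piFinset (fun _ : Fin d => range N), F (v + Pi.single i 1)) =
      ∑ v ∈ (Fintype.piFinset (fun _ : Fin d => range N)) with v i = 0, F v := by
  classical
  have h : (∑ v ∈ Fintype.piFinset (fun _ : Fin d => range N), F (v + Pi.single i 1)) =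
      ∑ v ∈ (Fintype.piFinset (fun _ : Fin d => range N)) with ¬ v i = 0, F v := by
    refine sum_bij_ne_zero (fun v _ _ => v + Pi.single i 1) ?_ ?_ ?_ ?_
    · intro v hv hne
      simp only [Fintype.mem_piFinset, mem_range, mem_filter] at hv ⊢
      refine ⟨fun j => ?_, by simp⟩
      by_cases hj : j = i
      · subst hj
        have h1 : (v + Pi.single j 1 : Fin d → ℕ) j ≠ N := fun h => hne (hF _ h)
        have := hv j
        simp at h1 ⊢
        omega
      · simpa [hj] using hv j
    · intro a _ _ b _ _ hab
      exact add_right_cancel hab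
    · intro b hb hne
      simp only [Fintype.mem_piFinset, mem_range, mem_filter] at hb
      have he : (b - Pi.single i 1) + Pi.single i 1 = b := by
        funext j
        by_cases hj : j = i
        · subst hj
          have := hb.2
          simp
          omega
        · simp [hj]
      refine ⟨b - Pi.single i 1, ?_, ?_, he⟩
      · simp only [Fintype.mem_piFinset, mem_range]
        intro j
        have := hb.1 j
        simp only [Pi.sub_apply]
        omega
      · rwa [he]
    · intros; rfl
  rw [h, ← sum_filter_add_sum_filter_not _ (fun v : Fin d → ℕ => v i = 0), add_assoc,
    CharTwo.add_self_eq_zero, add_zero]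

open Finset in
theorem aux_parity (N : ℕ) (hN : 1 ≤ N) : ∀ (n : ℕ) (l : (Fin n → ℕ) → ℕ)
    (_ : ∀ x, l x ≤ n)
    (_ : ∀ (x : Fin n → ℕ) (i : Fin n), x i = 0 → l x + i + 1 ≤ n)
    (_ : ∀ (x : Fin n → ℕ) (i : Fin n), x i = N → l x + i + 1 ≠ n),
    (∑ v ∈ Fintype.piFinset (fun _ : Fin n => range N), ∑ σ : Equiv.Perm (Fin n),
      if (∀ c ≤ n, ∃ j ≤ n, l (auxVx v σ j) = c) then (1 : ZMod 2) else 0) = 1 := by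
  classical
  intro n
  induction n with
  | zero =>
    intro l h1 _ _
    have : ∀ x, l x = 0 := fun x => Nat.le_zero.mp (h1 x)
    simp [this]
  | succ n ih =>
    intro l h1 h2 h3
    have hih := ih (fun y => l (Fin.cons 0 y))
      (fun y => by have := h2 (Fin.cons 0 y) 0 rfl; simp at this; omega)
      (fun y i hi => by
        have := h2 (Fin.cons 0 y) i.succ (by simpa using hi); simp at this; omega)
      (fun y i hi => by
        have := h3 (Fin.cons 0 y) i.succ (by simpa using hi); simp at this; omega)
    -- facets obtained by removing vertex 0
    let F : Equiv.Perm (Fin (n + 1)) → (Fin (n + 1) → ℕ) → ZMod 2 := fun σ v =>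
      if (∀ c ≤ n, ∃ j ≤ n, l (auxVx v σ (j + 1)) = c) then 1 else 0
    have hF1 : ∀ σ v, v (σ.symm 0) = N → F σ v = 0 := by
      intro σ v hv
      simp only [F]
      rw [if_neg]
      intro h
      obtain ⟨j, hj, hc⟩ := h (n - (σ.symm 0 : Fin (n + 1))) (by omega)
      have := h3 (auxVx v σ (j + 1)) (σ.symm 0) (by simp [auxVx, hv])
      have := (σ.symm 0).isLt
      omega
    have hF2 : ∀ σ v, σ.symm 0 ≠ 0 → v (σ.symm 0) = 0 → F σ v = 0 := by
      intro σ v hne hv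
      simp only [F]
      rw [if_neg]
      intro h
      obtain ⟨j, hj, hc⟩ := h n le_rfl
      have := h2 (auxVx v σ (j + 1)) (σ.symm 0) (by simp [auxVx, hv])
      have h0 : ((σ.symm 0 : Fin (n + 1)) : ℕ) ≠ 0 := fun h => hne (Fin.ext h)
      omega
    let D : (Fin (n + 1) → ℕ) → Equiv.Perm (Fin (n + 1)) → ℕ → ZMod 2 := fun v σ k =>
      if (∀ c ≤ n, ∃ j ≤ n + 1, j ≠ k ∧ l (auxVx v σ j) = c) then 1 else 0
    have hD0 : ∀ v σ, D v σ 0 = F σ v := by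
      intro v σ
      simp only [D, F]
      congr 1
      refine propext (forall₂_congr fun c _ => ⟨?_, ?_⟩)
      · rintro ⟨j, hj, hj0, h⟩
        exact ⟨j - 1, by omega, by rwa [Nat.sub_add_cancel (by omega)]⟩
      · rintro ⟨j, hj, h⟩
        exact ⟨j + 1, by omega, by omega, h⟩
    have hDl : ∀ v σ, D v ((finRotate (n + 1)).symm * σ) (n + 1) =
        F σ (v + Pi.single (σ.symm 0) 1) := by
      intro v σ
      simp only [D, F]
      congr 1
      refine propext (forall₂_congr fun c _ => ⟨?_, ?_⟩)
      · rintro ⟨j, hj, hj0, h⟩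
        exact ⟨j, by omega, by rwa [auxVx_rot _ _ _ (by omega)]⟩
      · rintro ⟨j, hj, h⟩
        exact ⟨j, by omega, by omega, by rwa [auxVx_rot _ _ _ hj] at h⟩
    have hmid : ∀ v, ∀ k < n, ∑ σ, D v σ (k + 1) = 0 := fun v k hk => aux_mid l v k hk
    have hsum : ∀ v, (∑ σ : Equiv.Perm (Fin (n + 1)),
        if (∀ c ≤ n + 1, ∃ j ≤ n + 1, l (auxVx v σ j) = c) then (1 : ZMod 2) else 0) =
        ∑ σ, F σ v + ∑ σ, F σ (v + Pi.single (σ.symm 0) 1) := by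
      intro v
      have e1 : ∀ σ : Equiv.Perm (Fin (n + 1)),
          (if (∀ c ≤ n + 1, ∃ j ≤ n + 1, l (auxVx v σ j) = c) then (1 : ZMod 2) else 0) =
          ∑ k ∈ range (n + 2), D v σ k := fun σ =>
        (aux_door n (fun j => l (auxVx v σ j)) (fun j _ => h1 _)).symm
      simp_rw [e1]
      rw [sum_comm, sum_range_succ, sum_range_succ', sum_eq_zero
        (fun k hk => hmid v k (mem_range.mp hk)), zero_add]
      simp_rw [hD0, ← hDl]
      congr 1
      exact (Equiv.sum_comp (Equiv.mulLeft (finRotate (n + 1)).symm)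
        (fun σ => D v σ (n + 1))).symm
    simp_rw [hsum]
    have hcm : ∀ G : (Fin (n + 1) → ℕ) → Equiv.Perm (Fin (n + 1)) → ZMod 2,
        ∑ v ∈ Fintype.piFinset (fun _ : Fin (n + 1) => range N), ∑ σ, G v σ =
        ∑ σ, ∑ v ∈ Fintype.piFinset (fun _ : Fin (n + 1) => range N), G v σ :=
      fun G => sum_comm
    rw [sum_add_distrib, hcm, hcm, ← sum_add_distrib]
    simp_rw [fun σ : Equiv.Perm (Fin (n + 1)) => aux_tele N (F σ) (σ.symm 0) (hF1 σ)]
    rw [← Equiv.sum_comp Equiv.Perm.decomposeFin.symm, Fintype.sum_prod_type,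
      sum_eq_single 0 _ (by simp)]
    · rw [← hih, sum_comm]
      refine sum_congr rfl fun τ _ => ?_
      have hs0 : (Equiv.Perm.decomposeFin.symm ((0 : Fin (n + 1)), τ)).symm 0 = 0 := by
        rw [Equiv.symm_apply_eq]; simp
      rw [hs0]
      symm
      refine sum_bij (fun w _ => Fin.cons 0 w) ?_ ?_ ?_ ?_
      · intro w hw
        simp only [Fintype.mem_piFinset, mem_range, mem_filter] at hw ⊢
        refine ⟨fun j => ?_, rfl⟩
        refine Fin.cases ?_ (fun j => ?_) j
        · simp; omega
        · simpa using hw j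
      · intro a _ b _ hab
        exact (Fin.cons_right_injective (α := fun _ : Fin (n + 1) => ℕ) 0) hab
      · intro b hb
        simp only [Fintype.mem_piFinset, mem_range, mem_filter] at hb
        refine ⟨Fin.tail b, ?_, ?_⟩
        · simp only [Fintype.mem_piFinset, mem_range]
          exact fun j => hb.1 j.succ
        · rw [← hb.2]; exact Fin.cons_self_tail b
      · intro w hw
        have hv : ∀ j, auxVx (Fin.cons 0 w)
            (Equiv.Perm.decomposeFin.symm ((0 : Fin (n + 1)), τ)) (j + 1) =
            (Fin.cons 0 (auxVx w τ j) : Fin (n + 1) → ℕ) := by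
          intro j
          funext i
          refine Fin.cases ?_ (fun i => ?_) i
          · simp [auxVx]
          · simp [auxVx]
        simp only [F, hv]
    · intro p _ hp
      refine sum_eq_zero fun τ _ => sum_eq_zero fun v hv => ?_
      refine hF2 _ _ ?_ (mem_filter.mp hv).2
      intro h
      rw [Equiv.symm_apply_eq] at h
      simp at h
      exact hp h.symm

open Finset in
theorem aux_kuhn (N : ℕ) (hN : 1 ≤ N) (n : ℕ) (a : (Fin n → ℕ) → Fin n → Prop)
    (h0 : ∀ x i, x i = 0 → ¬ a x i) (h1 : ∀ x i, x i = N → a x i) :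
    ∃ v : Fin n → ℕ, (∀ i, v i < N) ∧ ∀ i,
      (∃ y : Fin n → ℕ, (∀ j, v j ≤ y j ∧ y j ≤ v j + 1) ∧ ¬ a y i) ∧
      (∃ z : Fin n → ℕ, (∀ j, v j ≤ z j ∧ z j ≤ v j + 1) ∧ a z i) := by
  classical
  have hP : ∀ x, ∃ c, c = n ∨ ∃ i : Fin n, (i : ℕ) + c + 1 = n ∧ ¬ a x i :=
    fun x => ⟨n, Or.inl rfl⟩
  have hpar := aux_parity N hN n (fun x => Nat.find (hP x))
    (fun x => Nat.find_min' _ (Or.inl rfl))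
    (fun x i hi => by
      have : Nat.find (hP x) ≤ n - 1 - i := Nat.find_min' _ (Or.inr ⟨i, by omega, h0 x i hi⟩)
      omega)
    (fun x i hi h => by
      rcases Nat.find_spec (hP x) with h' | ⟨i', h', h''⟩
      · omega
      · have : i' = i := Fin.ext (by omega)
        subst this
        exact h'' (h1 x i' hi))
  obtain ⟨v, hv, hv'⟩ := exists_ne_zero_of_sum_ne_zero (by rw [hpar]; exact one_ne_zero)
  obtain ⟨σ, -, hσ⟩ := exists_ne_zero_of_sum_ne_zero hv'
  have hfull := (ite_ne_right_iff.mp hσ).1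
  have hvx : ∀ k j, v j ≤ auxVx v σ k j ∧ auxVx v σ k j ≤ v j + 1 := by
    intro k j
    simp only [auxVx]
    split_ifs <;> omega
  refine ⟨v, by simpa using hv, fun i => ⟨?_, ?_⟩⟩
  · obtain ⟨k, hk, hc⟩ := hfull (n - 1 - i) (by omega)
    refine ⟨auxVx v σ k, hvx k, ?_⟩
    rcases Nat.find_spec (hP (auxVx v σ k)) with h' | ⟨i', h', h''⟩
    · omega
    · have : i' = i := Fin.ext (by omega)
      rwa [← this]
  · obtain ⟨k, hk, hc⟩ := hfull n le_rfl
    refine ⟨auxVx v σ k, hvx k, ?_⟩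
    by_contra hcon
    have : Nat.find (hP (auxVx v σ k)) ≤ n - 1 - i :=
      Nat.find_min' _ (Or.inr ⟨i, by omega, hcon⟩)
    omega

theorem aux_brouwer_cube (n : ℕ) (h : (Fin n → ℝ) → (Fin n → ℝ)) (hc : Continuous h)
    (hm : ∀ x, (∀ i, 0 ≤ x i ∧ x i ≤ 1) → ∀ i, 0 ≤ h x i ∧ h x i ≤ 1) :
    ∃ x, (∀ i, 0 ≤ x i ∧ x i ≤ 1) ∧ h x = x := by
  have step : ∀ M : ℕ, ∃ p : Fin n → ℝ, (∀ i, 0 ≤ p i ∧ p i ≤ 1) ∧ ∀ i,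
      (∃ y : Fin n → ℝ, (∀ j, |y j - p j| ≤ 1 / ((M : ℝ) + 1)) ∧ y i ≤ h y i) ∧
      (∃ z : Fin n → ℝ, (∀ j, |z j - p j| ≤ 1 / ((M : ℝ) + 1)) ∧ h z i ≤ z i) := by
    intro M
    have hMp : (0 : ℝ) < (M : ℝ) + 1 := by positivity
    let s : (Fin n → ℕ) → (Fin n → ℝ) := fun x i => (x i : ℝ) / ((M : ℝ) + 1)
    obtain ⟨v, hv, hv'⟩ := aux_kuhn (M + 1) (by omega) n
      (fun x i => x i ≠ 0 ∧ (x i = M + 1 ∨ h (s x) i ≤ s x i))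
      (fun x i hi h => h.1 hi) (fun x i hi => ⟨by omega, Or.inl hi⟩)
    have hs : ∀ y : Fin n → ℕ, (∀ j, v j ≤ y j ∧ y j ≤ v j + 1) →
        (∀ i, 0 ≤ s y i ∧ s y i ≤ 1) ∧ ∀ j, |s y j - s v j| ≤ 1 / ((M : ℝ) + 1) := by
      intro y hy
      refine ⟨fun i => ⟨by positivity, ?_⟩, fun j => ?_⟩
      · simp only [s]
        rw [div_le_one hMp]
        have := (hy i).2
        have := hv i
        exact_mod_cast (by omega : y i ≤ M + 1)
      · simp only [s]
        rw [← sub_div, abs_div, abs_of_pos hMp]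
        gcongr
        have h1 : (v j : ℝ) ≤ y j := by exact_mod_cast (hy j).1
        have h2 : (y j : ℝ) ≤ v j + 1 := by exact_mod_cast (hy j).2
        rw [abs_le]
        constructor <;> linarith
    refine ⟨s v, (hs v (fun j => ⟨le_rfl, by omega⟩)).1, fun i => ⟨?_, ?_⟩⟩
    · obtain ⟨y, hy, hya⟩ := (hv' i).1
      refine ⟨s y, (hs y hy).2, ?_⟩
      by_cases h0 : y i = 0
      · have := (hm (s y) (hs y hy).1 i).1
        simpa [s, h0] using this
      · by_contra hcon
        exact hya ⟨h0, Or.inr (le_of_not_ge hcon)⟩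
    · obtain ⟨z, hz, -, hza⟩ := (hv' i).2
      refine ⟨s z, (hs z hz).2, ?_⟩
      rcases hza with h1 | h1
      · have := (hm (s z) (hs z hz).1 i).2
        have e : s z i = 1 := by
          simp only [s, h1]
          push_cast
          exact div_self hMp.ne'
        rwa [e]
      · exact h1
  choose p hp hyz using step
  choose y hy hy' using fun M i => (hyz M i).1
  choose z hz hz' using fun M i => (hyz M i).2
  have hcomp : IsCompact (Set.Icc (0 : Fin n → ℝ) 1) := isCompact_Icc
  obtain ⟨x, hx, φ, hφ, hlim⟩ := hcomp.tendsto_subseq (x := p)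
    (fun M => ⟨fun i => (hp M i).1, fun i => (hp M i).2⟩)
  have hsm : Filter.Tendsto (fun k => 1 / (((φ k : ℕ) : ℝ) + 1)) Filter.atTop (nhds 0) :=
    tendsto_one_div_add_atTop_nhds_zero_nat.comp hφ.tendsto_atTop
  have hw : ∀ w : ℕ → Fin n → ℝ, (∀ M j, |w M j - p M j| ≤ 1 / ((M : ℝ) + 1)) →
      Filter.Tendsto (fun k => w (φ k)) Filter.atTop (nhds x) := by
    intro w hw
    rw [tendsto_pi_nhds]
    intro j
    have h1 : Filter.Tendsto (fun k => w (φ k) j - p (φ k) j) Filter.atTop (nhds 0) :=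
      squeeze_zero_norm (fun k => hw (φ k) j) hsm
    have h2 := (tendsto_pi_nhds.mp hlim j)
    simpa using h1.add h2
  refine ⟨x, fun i => ⟨hx.1 i, hx.2 i⟩, ?_⟩
  funext i
  have hy2 := hw (fun M => y M i) (fun M => hy M i)
  have hz2 := hw (fun M => z M i) (fun M => hz M i)
  apply le_antisymm
  · exact le_of_tendsto_of_tendsto' (tendsto_pi_nhds.mp ((hc.tendsto x).comp hz2) i)
      (tendsto_pi_nhds.mp hz2 i) (fun k => hz' (φ k) i)
  · exact le_of_tendsto_of_tendsto' (tendsto_pi_nhds.mp hy2 i)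
      (tendsto_pi_nhds.mp ((hc.tendsto x).comp hy2) i) (fun k => hy' (φ k) i)

/-- Brouwer on the standard simplex. -/
theorem aux_brouwer_simplex (n : ℕ) (hn : 0 < n) (g : (Fin n → ℝ) → (Fin n → ℝ)) (hc : Continuous g)
    (hm : ∀ x, (∀ i, 0 ≤ x i) → ∑ i, x i = 1 → (∀ i, 0 ≤ g x i) ∧ ∑ i, g x i = 1) :
    ∃ x, (∀ i, 0 ≤ x i) ∧ ∑ i, x i = 1 ∧ g x = x := by
  have hnp : (0 : ℝ) < n := by exact_mod_cast hn
  let r : (Fin n → ℝ) → (Fin n → ℝ) := fun μ i =>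
    (μ i + max (1 - ∑ j, μ j) 0 / n) / max 1 (∑ j, μ j)
  have hpos : ∀ μ : Fin n → ℝ, 0 < max 1 (∑ j, μ j) := fun μ =>
    lt_of_lt_of_le one_pos (le_max_left _ _)
  have hr : Continuous r := by
    refine continuous_pi fun i => ?_
    refine Continuous.div (by fun_prop) (by fun_prop) (fun μ => (hpos μ).ne')
  have hr1 : ∀ μ, (∀ i, 0 ≤ μ i) → (∀ i, 0 ≤ r μ i) ∧ ∑ i, r μ i = 1 := by
    intro μ hμ
    refine ⟨fun i => ?_, ?_⟩
    · have := hμ i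
      have := hpos μ
      simp only [r]
      positivity
    · simp only [r]
      rw [← Finset.sum_div, div_eq_one_iff_eq (hpos μ).ne', Finset.sum_add_distrib]
      simp only [Finset.sum_const, Finset.card_univ, Fintype.card_fin, nsmul_eq_mul]
      rw [mul_div_cancel₀ _ hnp.ne']
      rcases le_total 1 (∑ j, μ j) with h | h
      · rw [max_eq_right (by linarith), max_eq_right h]; ring
      · rw [max_eq_left (by linarith), max_eq_left h]; ring
  have hr2 : ∀ μ, ∑ i, μ i = 1 → r μ = μ := by
    intro μ h
    funext i
    simp [r, h]
  have hgr : ∀ μ, (∀ i, 0 ≤ μ i) → (∀ i, 0 ≤ g (r μ) i) ∧ ∑ i, g (r μ) i = 1 :=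
    fun μ hμ => hm _ (hr1 μ hμ).1 (hr1 μ hμ).2
  obtain ⟨x, hx, hfix⟩ := aux_brouwer_cube n (fun μ => g (r μ)) (hc.comp hr) (by
    intro μ hμ i
    obtain ⟨h1, h2⟩ := hgr μ (fun i => (hμ i).1)
    refine ⟨h1 i, ?_⟩
    rw [← h2]
    exact Finset.single_le_sum (f := fun j => g (r μ) j) (fun j _ => h1 j) (Finset.mem_univ i))
  obtain ⟨h1, h2⟩ := hgr x (fun i => (hx i).1)
  have hfix' : g (r x) = x := hfix
  rw [hfix'] at h2
  rw [hr2 x h2] at hfix'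
  exact ⟨x, fun i => (hx i).1, h2, hfix'⟩

/-- Finite Ky Fan inequality. -/
theorem aux_fan_fin {E : Type*} [AddCommGroup E] [Module ℝ E] [TopologicalSpace E]
    [ContinuousAdd E] [ContinuousSMul ℝ E] (K : Set E) (hK : Convex ℝ K)
    (φ : E → E → ℝ) (hφc : ∀ y, Continuous fun x => φ x y)
    (hφ : ∀ x ∈ K, ConcaveOn ℝ K (φ x)) (hφ0 : ∀ x ∈ K, φ x x = 0)
    (m : ℕ) (hm : 0 < m) (y : Fin m → E) (hy : ∀ k, y k ∈ K) :
    ∃ x ∈ K, ∀ k, φ x (y k) ≤ 0 := by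
  let X : (Fin m → ℝ) → E := fun t => ∑ k, t k • y k
  have hX : Continuous X := by fun_prop
  let p : (Fin m → ℝ) → Fin m → ℝ := fun t k => max (φ (X t) (y k)) 0
  have hp : ∀ k, Continuous fun t => p t k := fun k =>
    ((hφc (y k)).comp hX).max continuous_const
  have hp0 : ∀ t k, 0 ≤ p t k := fun t k => le_max_right _ _
  have hS0 : ∀ t, 0 ≤ ∑ k, p t k := fun t => Finset.sum_nonneg fun k _ => hp0 t k
  obtain ⟨t, ht0, ht1, hfix⟩ := aux_brouwer_simplex m hm
    (fun t k => (t k + p t k) / (1 + ∑ j, p t j))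
    (by
      refine continuous_pi fun k => Continuous.div ?_ ?_ ?_
      · exact (continuous_apply k).add (hp k)
      · exact continuous_const.add (continuous_finset_sum _ fun j _ => hp j)
      · intro t
        have := hS0 t
        positivity)
    (by
      intro t h0 h1
      refine ⟨fun k => ?_, ?_⟩
      · have := hS0 t
        have := h0 k
        have := hp0 t k
        positivity
      · rw [← Finset.sum_div, Finset.sum_add_distrib, h1]
        have := hS0 t
        exact div_self (by positivity))
  have hXK : X t ∈ K := hK.sum_mem (fun k _ => ht0 k) ht1 (fun k _ => hy k)
  refine ⟨X t, hXK, ?_⟩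
  set S := ∑ j, p t j with hS
  have hpt : ∀ k, p t k = S * t k := by
    intro k
    have := congrFun hfix k
    rw [div_eq_iff (by have := hS0 t; positivity)] at this
    linarith
  have hSz : S = 0 := by
    by_contra hne
    have hSpos : 0 < S := lt_of_le_of_ne (hS0 t) (Ne.symm hne)
    have hpos : ∀ k, 0 < t k → 0 < φ (X t) (y k) := by
      intro k hk
      have h1 : 0 < p t k := by rw [hpt]; positivity
      by_contra hcon
      have : p t k = 0 := max_eq_right (le_of_not_gt hcon)
      linarith
    have hj := (hφ _ hXK).le_map_sum (t := Finset.univ) (w := t) (p := y)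
      (fun k _ => ht0 k) ht1 (fun k _ => hy k)
    have : (0 : ℝ) < ∑ k, t k • φ (X t) (y k) := by
      obtain ⟨k, hk⟩ : ∃ k, 0 < t k := by
        by_contra hcon
        push Not at hcon
        have : ∑ k, t k ≤ 0 := Finset.sum_nonpos fun k _ => hcon k
        linarith
      refine Finset.sum_pos' (fun j _ => ?_) ⟨k, Finset.mem_univ k, ?_⟩
      · rcases (ht0 j).eq_or_lt with h | h
        · simp [← h]
        · exact (mul_pos h (hpos j h)).le
      · exact mul_pos hk (hpos k hk)
    have h0 := hφ0 _ hXK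
    change _ ≤ φ (X t) (X t) at hj
    linarith
  intro k
  have : p t k = 0 := by rw [hpt, hSz, zero_mul]
  rw [← this]
  exact le_max_left _ _

theorem aux_fan {E : Type*} [AddCommGroup E] [Module ℝ E] [TopologicalSpace E]
    [ContinuousAdd E] [ContinuousSMul ℝ E] (K : Set E) (hK : Convex ℝ K) (hKc : IsCompact K)
    (hKn : K.Nonempty)
    (φ : E → E → ℝ) (hφc : ∀ y, Continuous fun x => φ x y)
    (hφ : ∀ x ∈ K, ConcaveOn ℝ K (φ x)) (hφ0 : ∀ x ∈ K, φ x x = 0) :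
    ∃ x ∈ K, ∀ y ∈ K, φ x y ≤ 0 := by
  have := hKc.inter_iInter_nonempty (fun y : K => {x | φ x y ≤ 0})
    (fun y => isClosed_le (hφc y) continuous_const) (by
      intro u
      rcases u.eq_empty_or_nonempty with rfl | hu
      · simpa using hKn
      · obtain ⟨x, hx, hx'⟩ := aux_fan_fin K hK φ hφc hφ hφ0 u.card (Finset.card_pos.mpr hu)
          (fun k => ((u.equivFin.symm k : u) : K)) (fun k => Subtype.coe_prop _)
        refine ⟨x, hx, ?_⟩
        simp only [Set.mem_iInter, Set.mem_setOf_eq]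
        intro y hy
        have := hx' (u.equivFin ⟨y, hy⟩)
        simpa using this)
  obtain ⟨x, hx, hx'⟩ := this
  refine ⟨x, hx, fun y hy => ?_⟩
  simp only [Set.mem_iInter, Set.mem_setOf_eq] at hx'
  exact hx' ⟨y, hy⟩



/-- Existence of Nash equilibria (Theorem 1 of the paper): with convex compact
nonempty strategy sets, continuous smooth parts `f i`, convex continuous
nonsmooth parts `q i`, and each `f i` convex in the player's own variable,
a Nash equilibrium exists. -/
theorem exists_nash_equilibrium
    (n l : ℕ) (hl : 1 ≤ l)
    (A : Fin l → Set (EuclideanSpace ℝ (Fin n)))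
    (f : Fin l → (Fin l → EuclideanSpace ℝ (Fin n)) → ℝ)
    (q : Fin l → EuclideanSpace ℝ (Fin n) → ℝ)
    (hAne : ∀ i, (A i).Nonempty)
    (hAconv : ∀ i, Convex ℝ (A i))
    (hAcomp : ∀ i, IsCompact (A i))
    (hf : ∀ i, Continuous (f i))
    (hqconv : ∀ i, ConvexOn ℝ Set.univ (q i))
    (hqcont : ∀ i, Continuous (q i))
    (hconv : ∀ x : Fin l → EuclideanSpace ℝ (Fin n), (∀ j, x j ∈ A j) →
      ∀ i, ConvexOn ℝ (A i) (fun xi => f i (Function.update x i xi))) :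
    ∃ xe : Fin l → EuclideanSpace ℝ (Fin n),
      (∀ i, xe i ∈ A i) ∧
      ∀ i, ∀ xi ∈ A i,
        f i xe + q i (xe i) ≤ f i (Function.update xe i xi) + q i xi := by
  classical
  let φ : (Fin l → EuclideanSpace ℝ (Fin n)) → (Fin l → EuclideanSpace ℝ (Fin n)) → ℝ :=
    fun x y => ∑ i, ((f i x + q i (x i)) - (f i (Function.update x i (y i)) + q i (y i)))
  have hconc : ∀ x ∈ Set.univ.pi A, ConcaveOn ℝ (Set.univ.pi A) (φ x) := by
    intro x hx
    have hx' : ∀ j, x j ∈ A j := fun j => hx j trivial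
    refine ⟨convex_pi fun i _ => hAconv i, ?_⟩
    intro y hy z hz a b ha hb hab
    simp only [φ, smul_eq_mul, Finset.mul_sum, ← Finset.sum_add_distrib]
    refine Finset.sum_le_sum fun i _ => ?_
    have h1 := (hconv x hx' i).2 (hy i trivial) (hz i trivial) ha hb hab
    have h2 := (hqconv i).2 (Set.mem_univ (y i)) (Set.mem_univ (z i)) ha hb hab
    simp only [smul_eq_mul] at h1 h2
    simp only [Pi.add_apply, Pi.smul_apply]
    have hb' : b = 1 - a := by linarith
    subst hb'
    linarith
  obtain ⟨x, hx, hxy⟩ := aux_fan (Set.univ.pi A) (convex_pi fun i _ => hAconv i)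
    (isCompact_univ_pi hAcomp) (Set.univ_pi_nonempty_iff.mpr hAne) φ
    (by
      intro y
      refine continuous_finset_sum _ fun i _ => ?_
      have h1 := hf i
      have h2 := hqcont i
      have h3 : Continuous fun x : Fin l → EuclideanSpace ℝ (Fin n) =>
        Function.update x i (y i) := continuous_id.update i continuous_const
      fun_prop)
    hconc
    (by intro x _; simp [φ])
  refine ⟨x, fun i => hx i trivial, fun i xi hxi => ?_⟩
  have h := hxy (Function.update x i xi) (by
    intro j _
    by_cases hj : j = i
    · subst hj; simpa using hxi
    · simpa [hj] using hx j trivial)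
  simp only [φ] at h
  rw [Finset.sum_eq_single i] at h
  · simp at h
    linarith
  · intro j _ hj
    simp [hj]
  · simp
end

section
/- Let F : ℝᵐ × ℝˢ → ℝˢ (with ℝᵐ = EuclideanSpace ℝ (Fin m), ℝˢ = EuclideanSpace ℝ (Fin s)) be continuously differentiable, let q : ℝˢ → ℝ be convex and continuous, let A ⊆ ℝˢ be closed and convex, and define the solution map S : ℝᵐ → Set ℝˢ by S(p) := {x ∈ A : ⟨F(p,x), y − x⟩ + q(y) − q(x) ≥ 0 for all y ∈ A}. Let (p̄, x̄) be such that x̄ ∈ S(p̄), and assume that the partial Jacobian M := ∇ₓF(p̄, x̄) (a linear map ℝˢ → ℝˢ, not necessarily symmetric) is positive definite, i.e. ⟨M u, u⟩ > 0 for every u ≠ 0. Then S has a single-valued and Lipschitzian localization around (p̄, x̄): there exist open neighborhoods U of p̄ and V of x̄ and a Lipschitz continuous map s : U → ℝˢ with s(p̄) = x̄ such that S(p) ∩ V = {s(p)} for every p ∈ U. -/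
open scoped RealInnerProductSpace

section Aux

variable {E : Type*} [NormedAddCommGroup E] [InnerProductSpace ℝ E]

lemma vi_aux_lin {a b d : ℝ} (hd : 0 < d) (h : ∀ t : ℝ, 0 < t → t ≤ d → 0 ≤ t * a + t ^ 2 * b) :
    0 ≤ a := by
  by_contra ha
  push Not at ha
  have hb : 0 < |b| + 1 := by positivity
  have hpos : 0 < min d (-a / (2 * (|b| + 1))) :=
    lt_min hd (div_pos (by linarith) (by positivity))
  set t := min d (-a / (2 * (|b| + 1))) with ht
  have h1 := h t hpos (min_le_left _ _)
  have h2 : t ≤ -a / (2 * (|b| + 1)) := min_le_right _ _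
  rw [le_div_iff₀ (by positivity)] at h2
  have h3 : 0 ≤ t * (a + t * b) := by nlinarith
  have h4 : 0 ≤ a + t * b := nonneg_of_mul_nonneg_right h3 hpos
  have h5 : t * b ≤ t * |b| := mul_le_mul_of_nonneg_left (le_abs_self b) hpos.le
  nlinarith

lemma vi_aux_prox (C : Set E) (hC : IsCompact C) (hCc : Convex ℝ C) (hne : C.Nonempty)
    (q : E → ℝ) (hq : ConvexOn ℝ Set.univ q) (hqc : Continuous q) (z : E) :
    ∃ x ∈ C, ∀ y ∈ C, 0 ≤ ⟪x - z, y - x⟫ + q y - q x := by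
  obtain ⟨x, hx, hmin⟩ := hC.exists_isMinOn hne
    (f := fun y => q y + (1/2) * ‖y - z‖ ^ 2) (by fun_prop)
  refine ⟨x, hx, fun y hy => ?_⟩
  refine vi_aux_lin (b := (1/2) * ‖y - x‖ ^ 2) one_pos fun t ht0 ht1 => ?_
  have hmem : (1 - t) • x + t • y ∈ C := hCc hx hy (by linarith) ht0.le (by ring)
  have h1 := hmin hmem
  simp only [Set.mem_setOf_eq] at h1
  have h2 := hq.2 (Set.mem_univ x) (Set.mem_univ y) (by linarith : 0 ≤ 1 - t) ht0.le (by ring)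
  simp only [smul_eq_mul] at h2
  have h3 : (1 - t) • x + t • y - z = (x - z) + t • (y - x) := by module
  rw [h3, norm_add_sq_real, inner_smul_right, norm_smul, Real.norm_of_nonneg ht0.le] at h1
  nlinarith

lemma vi_aux_exists (C : Set E) (hC : IsCompact C) (hCc : Convex ℝ C) (hne : C.Nonempty)
    (q : E → ℝ) (hq : ConvexOn ℝ Set.univ q) (hqc : Continuous q) (G : E → E)
    (μ K : ℝ) (hμ : 0 < μ) (hμK : μ ≤ K)
    (hmono : ∀ x ∈ C, ∀ y ∈ C, μ * ‖x - y‖ ^ 2 ≤ ⟪G x - G y, x - y⟫)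
    (hlip : ∀ x ∈ C, ∀ y ∈ C, ‖G x - G y‖ ≤ K * ‖x - y‖) :
    ∃ x ∈ C, ∀ y ∈ C, 0 ≤ ⟪G x, y - x⟫ + q y - q x := by
  have hK : 0 < K := by linarith
  set τ := μ / K ^ 2 with hτ
  have hτ0 : 0 < τ := by positivity
  have hp := fun z => vi_aux_prox C hC hCc hne (fun y => τ * q y) (by simpa using hq.smul hτ0.le)
    (by fun_prop) z
  choose P hPC hP using hp
  have hPl : ∀ z w, ‖P z - P w‖ ≤ ‖z - w‖ := by
    intro z w
    have h1 := hP z (P w) (hPC w)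
    have h2 := hP w (P z) (hPC z)
    have h3 : ⟪P z - z, P w - P z⟫ + ⟪P w - w, P z - P w⟫
        = ⟪z - w, P z - P w⟫ - ‖P z - P w‖ ^ 2 := by
      rw [← real_inner_self_eq_norm_sq]
      simp only [inner_sub_left, inner_sub_right]
      ring
    have h4 := real_inner_le_norm (z - w) (P z - P w)
    by_contra hcon
    push Not at hcon
    nlinarith [norm_nonneg (z - w)]
  have hc0 : 0 ≤ 1 - μ ^ 2 / K ^ 2 := by
    rw [sub_nonneg, div_le_one (by positivity)]
    gcongr
  set c : NNReal := ⟨√(1 - μ ^ 2 / K ^ 2), Real.sqrt_nonneg _⟩ with hc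
  have hstep : ∀ x ∈ C, ∀ y ∈ C, ‖(x - τ • G x) - (y - τ • G y)‖ ≤ √(1 - μ ^ 2 / K ^ 2) * ‖x - y‖ := by
    intro x hx y hy
    refine (pow_le_pow_iff_left₀ (norm_nonneg _) (by positivity) two_ne_zero).1 ?_
    rw [mul_pow, Real.sq_sqrt hc0]
    have e : (x - τ • G x) - (y - τ • G y) = (x - y) - τ • (G x - G y) := by module
    rw [e, norm_sub_sq_real, inner_smul_right, norm_smul, Real.norm_of_nonneg hτ0.le,
      real_inner_comm, mul_pow]
    have h1 := mul_le_mul_of_nonneg_left (hmono x hx y hy) hτ0.le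
    have h2 : ‖G x - G y‖ ^ 2 ≤ K ^ 2 * ‖x - y‖ ^ 2 := by
      rw [← mul_pow]; gcongr; exact hlip x hx y hy
    have h3 := mul_le_mul_of_nonneg_left h2 (sq_nonneg τ)
    have h4 : τ * μ = μ ^ 2 / K ^ 2 := by rw [hτ]; ring
    have h5 : τ ^ 2 * K ^ 2 = μ ^ 2 / K ^ 2 := by rw [hτ]; field_simp
    rw [← mul_assoc, h4] at h1
    rw [← mul_assoc, h5] at h3
    linarith
  let T : C → C := fun x => ⟨P (x - τ • G x), hPC _⟩
  have hT : ContractingWith c T := by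
    constructor
    · rw [← NNReal.coe_lt_coe]
      change √(1 - μ ^ 2 / K ^ 2) < 1
      rw [Real.sqrt_lt' one_pos]
      have : 0 < μ ^ 2 / K ^ 2 := by positivity
      linarith
    · refine LipschitzWith.of_dist_le_mul fun x y => ?_
      rw [Subtype.dist_eq, Subtype.dist_eq, dist_eq_norm, dist_eq_norm]
      exact (hPl _ _).trans (hstep x x.2 y y.2)
  haveI : Nonempty C := hne.to_subtype
  haveI : CompleteSpace C := hC.isComplete.completeSpace_coe
  have hfix : T (ContractingWith.fixedPoint T hT) = _ := hT.fixedPoint_isFixedPt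
  set x := ContractingWith.fixedPoint T hT
  refine ⟨x, x.2, fun y hy => ?_⟩
  have hfx : P (x - τ • G x) = (x : E) := congrArg Subtype.val hfix
  have h := hP (x - τ • G x) y hy
  rw [hfx, sub_sub_cancel, real_inner_smul_left] at h
  have : 0 ≤ τ * (⟪G x, y - x⟫ + q y - q x) := by linarith
  exact nonneg_of_mul_nonneg_right this hτ0

lemma vi_aux_coercive [FiniteDimensional ℝ E] (M : E →L[ℝ] E)
    (hM : ∀ u, u ≠ 0 → 0 < ⟪M u, u⟫) : ∃ μ > 0, ∀ u, μ * ‖u‖ ^ 2 ≤ ⟪M u, u⟫ := by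
  rcases subsingleton_or_nontrivial E with h | h
  · exact ⟨1, one_pos, fun u => by simp [Subsingleton.elim u 0]⟩
  obtain ⟨v, hv, hmin⟩ := (isCompact_sphere (0 : E) 1).exists_isMinOn
    (NormedSpace.sphere_nonempty.2 zero_le_one) (f := fun u => ⟪M u, u⟫) (by fun_prop)
  have hv1 : ‖v‖ = 1 := by simpa using hv
  refine ⟨⟪M v, v⟫, hM v (by rintro rfl; simp at hv1), fun u => ?_⟩
  rcases eq_or_ne u 0 with rfl | hu
  · simp
  have hn : 0 < ‖u‖ := norm_pos_iff.2 hu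
  have h1 := hmin (show ‖u‖⁻¹ • u ∈ Metric.sphere (0 : E) 1 by simp [norm_smul, hn.ne'])
  simp only [Set.mem_setOf_eq, map_smul, real_inner_smul_left, inner_smul_right] at h1
  rw [← mul_assoc, ← sq, inv_pow, ← div_eq_inv_mul, le_div_iff₀ (by positivity)] at h1
  exact h1

end Aux


/-- Proposition 1 of the paper: if `F` is continuously differentiable, `q` is
convex and continuous, `A` is closed and convex and the partial Jacobian
`∇ₓF(p̄, x̄)` is positive definite, then the solution map `S` of the
parametrized variational inequality of the second kind has a single-valued and
Lipschitzian localization around `(p̄, x̄)`. -/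
theorem vi_solution_map_single_valued_lipschitz_localization
    (m s : ℕ)
    (F : EuclideanSpace ℝ (Fin m) × EuclideanSpace ℝ (Fin s) → EuclideanSpace ℝ (Fin s))
    (hF : ContDiff ℝ 1 F)
    (q : EuclideanSpace ℝ (Fin s) → ℝ)
    (hqconv : ConvexOn ℝ Set.univ q) (hqcont : Continuous q)
    (A : Set (EuclideanSpace ℝ (Fin s))) (hAcl : IsClosed A) (hAconv : Convex ℝ A)
    (S : EuclideanSpace ℝ (Fin m) → Set (EuclideanSpace ℝ (Fin s)))
    (hS : ∀ p, S p = {x | x ∈ A ∧ ∀ y ∈ A, 0 ≤ ⟪F (p, x), y - x⟫ + q y - q x})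
    (pb : EuclideanSpace ℝ (Fin m)) (xb : EuclideanSpace ℝ (Fin s))
    (hxb : xb ∈ S pb)
    (hpd : ∀ u : EuclideanSpace ℝ (Fin s), u ≠ 0 →
      0 < ⟪fderiv ℝ (fun x => F (pb, x)) xb u, u⟫) :
    ∃ (U : Set (EuclideanSpace ℝ (Fin m))) (V : Set (EuclideanSpace ℝ (Fin s)))
      (sl : EuclideanSpace ℝ (Fin m) → EuclideanSpace ℝ (Fin s)) (L : NNReal),
      IsOpen U ∧ IsOpen V ∧ pb ∈ U ∧ xb ∈ V ∧
      LipschitzOnWith L sl U ∧ sl pb = xb ∧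
      ∀ p ∈ U, S p ∩ V = {sl p} := by

  set D := fderiv ℝ F (pb, xb) with hD
  have hst : HasStrictFDerivAt F D (pb, xb) :=
    (hF.contDiffAt).hasStrictFDerivAt (by norm_num)
  have hM : fderiv ℝ (fun x => F (pb, x)) xb = D.comp (ContinuousLinearMap.inr ℝ _ _) :=
    (hst.hasFDerivAt.comp xb (hasFDerivAt_prodMk_right pb xb)).fderiv
  rw [hM] at hpd
  obtain ⟨μ₀, hμ₀, hco⟩ := vi_aux_coercive _ hpd
  obtain ⟨μ, hμdef⟩ : ∃ μ, μ = μ₀ / 2 := ⟨_, rfl⟩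
  have hμ : 0 < μ := by linarith
  have hev := hst.isLittleO.def hμ
  obtain ⟨r₀, hr₀, hball⟩ := Metric.eventually_nhds_iff_ball.1 hev
  obtain ⟨r, hrdef⟩ : ∃ r, r = r₀ / 2 := ⟨_, rfl⟩
  have hr : 0 < r := by linarith
  have hest : ∀ p p' x x', dist p pb ≤ r → dist p' pb ≤ r → dist x xb ≤ r → dist x' xb ≤ r →
      ‖F (p, x) - F (p', x') - D ((p, x) - (p', x'))‖ ≤ μ * ‖(p, x) - (p', x')‖ := by
    intro p p' x x' h1 h2 h3 h4
    refine hball ((p, x), (p', x')) ?_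
    simp only [Metric.mem_ball, Prod.dist_eq, max_lt_iff]
    refine ⟨⟨?_, ?_⟩, ?_, ?_⟩ <;> linarith
  obtain ⟨K, hKdef⟩ : ∃ K, K = ‖D‖ + μ := ⟨_, rfl⟩
  have hμK : μ ≤ K := by linarith [norm_nonneg D]
  have hK : 0 < K := by linarith
  have hlip : ∀ p p' x x', dist p pb ≤ r → dist p' pb ≤ r → dist x xb ≤ r → dist x' xb ≤ r →
      ‖F (p, x) - F (p', x')‖ ≤ K * ‖(p, x) - (p', x')‖ := by
    intro p p' x x' h1 h2 h3 h4
    have e := hest p p' x x' h1 h2 h3 h4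
    have e2 := D.le_opNorm ((p, x) - (p', x'))
    have e3 := norm_le_norm_add_norm_sub' (F (p, x) - F (p', x')) (D ((p, x) - (p', x')))
    rw [hKdef, add_mul]
    linarith
  have hmono : ∀ p x x', dist p pb ≤ r → dist x xb ≤ r → dist x' xb ≤ r →
      μ * ‖x - x'‖ ^ 2 ≤ ⟪F (p, x) - F (p, x'), x - x'⟫ := by
    intro p x x' h1 h3 h4
    have e := hest p p x x' h1 h1 h3 h4
    have e1 : (p, x) - (p, x') = ((0 : EuclideanSpace ℝ (Fin m)), x - x') := by simp
    have e2 : ‖((0 : EuclideanSpace ℝ (Fin m)), x - x')‖ = ‖x - x'‖ := by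
      simp [Prod.norm_def]
    rw [e1, e2] at e
    have e3 := hco (x - x')
    simp only [ContinuousLinearMap.comp_apply, ContinuousLinearMap.inr_apply] at e3
    have e4 := abs_le.1 (abs_real_inner_le_norm
      (F (p, x) - F (p, x') - D (0, x - x')) (x - x'))
    rw [inner_sub_left] at e4
    have e5 := mul_le_mul_of_nonneg_right e (norm_nonneg (x - x'))
    nlinarith [e4.1]
  set C := A ∩ Metric.closedBall xb r with hC
  have hCcomp : IsCompact C := (isCompact_closedBall xb r).inter_left hAcl
  have hCconv : Convex ℝ C := hAconv.inter (convex_closedBall xb r)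
  rw [hS] at hxb
  have hxbC : xb ∈ C := ⟨hxb.1, Metric.mem_closedBall_self hr.le⟩
  -- Lipschitz estimate for solutions on C
  have hL : ∀ p p' x x', dist p pb ≤ r → dist p' pb ≤ r → x ∈ C → x' ∈ C →
      (∀ y ∈ C, 0 ≤ ⟪F (p, x), y - x⟫ + q y - q x) →
      (∀ y ∈ C, 0 ≤ ⟪F (p', x'), y - x'⟫ + q y - q x') →
      dist x x' ≤ K / μ * dist p p' := by
    intro p p' x x' h1 h2 hx hx' hs hs'
    have a1 := hs x' hx'
    have a2 := hs' x hx
    have a3 := hmono p x x' h1 hx.2 hx'.2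
    have a4 := hlip p' p x' x' h2 h1 hx'.2 hx'.2
    have e1 : (p', x') - (p, x') = (p' - p, (0 : EuclideanSpace ℝ (Fin s))) := by simp
    have e2 : ‖(p' - p, (0 : EuclideanSpace ℝ (Fin s)))‖ = ‖p' - p‖ := by
      simp [Prod.norm_def]
    rw [e1, e2] at a4
    have a5 := real_inner_le_norm (F (p', x') - F (p, x')) (x - x')
    have a6 : ⟪F (p, x), x' - x⟫ = - ⟪F (p, x), x - x'⟫ := by rw [← inner_neg_right, neg_sub]
    rw [inner_sub_left] at a3 a5
    rw [a6] at a1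
    have a7 := mul_le_mul_of_nonneg_right a4 (norm_nonneg (x - x'))
    rw [dist_eq_norm, dist_comm, dist_eq_norm, div_mul_eq_mul_div, le_div_iff₀ hμ]
    by_contra hcon
    push Not at hcon
    have hpos : 0 < ‖x - x'‖ := by
      by_contra h0
      have : ‖x - x'‖ = 0 := le_antisymm (not_lt.1 h0) (norm_nonneg _)
      rw [this, zero_mul] at hcon
      have : 0 ≤ K * ‖p' - p‖ := by positivity
      linarith
    have := mul_lt_mul_of_pos_right hcon hpos
    nlinarith
  have hex : ∀ p, ∃ x, dist p pb ≤ r →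
      x ∈ C ∧ ∀ y ∈ C, 0 ≤ ⟪F (p, x), y - x⟫ + q y - q x := by
    intro p
    by_cases hp : dist p pb ≤ r
    · obtain ⟨x, hx, h⟩ := vi_aux_exists C hCcomp hCconv ⟨xb, hxbC⟩ q hqconv hqcont
        (fun x => F (p, x)) μ K hμ hμK (fun x hx y hy => hmono p x y hp hx.2 hy.2)
        (fun x hx y hy => by
          have := hlip p p x y hp hp hx.2 hy.2
          simpa [Prod.norm_def] using this)
      exact ⟨x, fun _ => ⟨hx, h⟩⟩
    · exact ⟨xb, fun h => absurd h hp⟩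
  choose sl hsl using hex
  have hpbr : dist pb pb ≤ r := by simpa using hr.le
  have hslb : sl pb = xb := by
    have := hL pb pb (sl pb) xb hpbr hpbr (hsl pb hpbr).1 hxbC (hsl pb hpbr).2
      (fun y hy => hxb.2 y hy.1)
    rw [dist_self, mul_zero] at this
    exact dist_le_zero.1 this
  have hKμ : 0 < K / μ := div_pos hK hμ
  obtain ⟨δ, hδ⟩ : ∃ δ, δ = min r (r / (K / μ)) := ⟨_, rfl⟩
  have hδ0 : 0 < δ := hδ ▸ lt_min hr (div_pos hr hKμ)
  have hU : ∀ p ∈ Metric.ball pb δ, dist p pb ≤ r := fun p hp =>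
    (Metric.mem_ball.1 hp).le.trans (hδ ▸ min_le_left _ _)
  refine ⟨Metric.ball pb δ, Metric.ball xb r, sl, ⟨K / μ, hKμ.le⟩, Metric.isOpen_ball,
    Metric.isOpen_ball, Metric.mem_ball_self hδ0, Metric.mem_ball_self hr, ?_, hslb, ?_⟩
  · refine LipschitzOnWith.of_dist_le_mul fun p hp p' hp' => ?_
    exact hL p p' _ _ (hU p hp) (hU p' hp') (hsl p (hU p hp)).1 (hsl p' (hU p' hp')).1
      (hsl p (hU p hp)).2 (hsl p' (hU p' hp')).2
  · intro p hp
    have hpr := hU p hp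
    obtain ⟨hxC, hxs⟩ := hsl p hpr
    have hin : dist (sl p) xb < r := by
      have h1 := hL p pb _ _ hpr hpbr hxC (hsl pb hpbr).1 hxs (hsl pb hpbr).2
      rw [hslb] at h1
      have h2 : dist p pb < r / (K / μ) :=
        (Metric.mem_ball.1 hp).trans_le (hδ ▸ min_le_right _ _)
      rw [lt_div_iff₀ hKμ] at h2
      linarith
    ext x
    simp only [Set.mem_inter_iff, Set.mem_singleton_iff]
    constructor
    · rintro ⟨hx, hxV⟩
      rw [hS] at hx
      have := hL p p x (sl p) hpr hpr ⟨hx.1, (Metric.mem_ball.1 hxV).le⟩ hxC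
        (fun y hy => hx.2 y hy.1) hxs
      rw [dist_self, mul_zero] at this
      exact dist_le_zero.1 this
    · rintro rfl
      refine ⟨?_, hin⟩
      rw [hS]
      refine ⟨hxC.1, fun y hy => ?_⟩
      obtain ⟨x, hx⟩ : ∃ x, x = sl p := ⟨_, rfl⟩
      rw [← hx] at hxC hxs hin ⊢
      have hd : 0 < r - dist x xb := by linarith
      have hden : 0 < ‖y - x‖ + 1 := by positivity
      refine vi_aux_lin (b := 0) (d := min 1 ((r - dist x xb) / (‖y - x‖ + 1)))
        (lt_min one_pos (div_pos hd hden)) fun t ht0 htd => ?_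
      have ht1 : t ≤ 1 := htd.trans (min_le_left _ _)
      have ht2 := htd.trans (min_le_right _ _)
      rw [le_div_iff₀ hden] at ht2
      have hmemA : (1 - t) • x + t • y ∈ A := hAconv hxC.1 hy (by linarith) ht0.le (by ring)
      have e : (1 - t) • x + t • y - x = t • (y - x) := by module
      have hmemC : (1 - t) • x + t • y ∈ C := by
        refine ⟨hmemA, ?_⟩
        rw [Metric.mem_closedBall]
        refine (dist_triangle _ x _).trans ?_
        rw [dist_eq_norm, e, norm_smul, Real.norm_of_nonneg ht0.le]
        nlinarith
      have h1 := hxs _ hmemC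
      rw [e, inner_smul_right] at h1
      have h2 := hqconv.2 (Set.mem_univ x) (Set.mem_univ y) (by linarith : 0 ≤ 1 - t) ht0.le
        (by ring)
      simp only [smul_eq_mul] at h2
      nlinarith
end

section
/- Let l ≥ 1 players each have strategy space ℝⁿ (EuclideanSpace ℝ (Fin n)). For each i ∈ Fin l let A i ⊆ ℝⁿ be nonempty, compact and convex, let qᵢ : ℝⁿ → ℝ be convex and continuous, and let fᵢ : (Fin l → ℝⁿ) → ℝ be continuously differentiable with fᵢ convex in the player's own variable: for every profile x, xᵢ ↦ fᵢ(x with i-th component replaced by xᵢ) is convex. Let (x^k)_{k≥1} be a Gauss–Seidel sequence: for every k ≥ 1 and every i, x^k_i ∈ argmin over xᵢ ∈ A i of fᵢ(x^k_1, …, x^k_{i−1}, xᵢ, x^{k−1}_{i+1}, …, x^{k−1}_l) + qᵢ(xᵢ). If x^k converges as k → ∞ to some x* = (x*_1, …, x*_l), then x* is a Nash equilibrium: for every i, x*_i minimizes xᵢ ↦ fᵢ(x* with i-th component replaced by xᵢ) + qᵢ(xᵢ) over A i. -/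
/-- Theorem 4 of the paper: convergence of the nonsmooth Gauss–Seidel method.
If the Gauss–Seidel sequence `x k` (each player `i` consecutively minimizing his
own objective with the already-updated strategies of the preceding players and
the previous strategies of the remaining players) converges to some `xs`, then
`xs` is a Cournot–Nash equilibrium. -/
theorem gauss_seidel_limit_is_nash
    (n l : ℕ) (hl : 1 ≤ l)
    (A : Fin l → Set (EuclideanSpace ℝ (Fin n)))
    (f : Fin l → (Fin l → EuclideanSpace ℝ (Fin n)) → ℝ)
    (q : Fin l → EuclideanSpace ℝ (Fin n) → ℝ)
    (hAne : ∀ i, (A i).Nonempty)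
    (hAcomp : ∀ i, IsCompact (A i))
    (hAconv : ∀ i, Convex ℝ (A i))
    (hqconv : ∀ i, ConvexOn ℝ Set.univ (q i))
    (hqcont : ∀ i, Continuous (q i))
    (hf : ∀ i, ContDiff ℝ 1 (f i))
    (hfconv : ∀ i, ∀ x : Fin l → EuclideanSpace ℝ (Fin n),
      ConvexOn ℝ Set.univ (fun xi => f i (Function.update x i xi)))
    (x : ℕ → Fin l → EuclideanSpace ℝ (Fin n))
    -- the Gauss–Seidel iteration: for k ≥ 1, x k i minimizes player i's
    -- objective given x k 1, …, x k (i-1) and x (k-1) (i+1), …, x (k-1) l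
    (hgs : ∀ k : ℕ, 1 ≤ k → ∀ i : Fin l,
      x k i ∈ A i ∧
      ∀ xi ∈ A i,
        f i (Function.update (fun j => if j < i then x k j else x (k - 1) j) i (x k i))
            + q i (x k i)
          ≤ f i (Function.update (fun j => if j < i then x k j else x (k - 1) j) i xi)
            + q i xi)
    (xs : Fin l → EuclideanSpace ℝ (Fin n))
    (hconv : Filter.Tendsto x Filter.atTop (nhds xs)) :
    (∀ i, xs i ∈ A i) ∧
    ∀ i, ∀ xi ∈ A i, f i xs + q i (xs i) ≤ f i (Function.update xs i xi) + q i xi := by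
  have hx : ∀ i, Filter.Tendsto (fun k => x k i) Filter.atTop (nhds (xs i)) :=
    fun i => (tendsto_pi_nhds.1 hconv) i
  have hx1 : ∀ i, Filter.Tendsto (fun k => x (k - 1) i) Filter.atTop (nhds (xs i)) :=
    fun i => (hx i).comp (Filter.tendsto_sub_atTop_nat 1)
  have hy : ∀ i : Fin l, Filter.Tendsto
      (fun k => (fun j => if j < i then x k j else x (k - 1) j)) Filter.atTop (nhds xs) := by
    intro i
    rw [tendsto_pi_nhds]
    intro j
    by_cases h : j < i
    · simpa only [h, if_true] using hx j
    · simpa only [h, if_false] using hx1 j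
  refine ⟨fun i => (hAcomp i).isClosed.mem_of_tendsto (hx i) ?_, fun i xi hxi => ?_⟩
  · filter_upwards [Filter.eventually_ge_atTop 1] with k hk using (hgs k hk i).1
  · have h1 := (((hf i).continuous.tendsto _).comp ((hy i).update i (hx i))).add
      (((hqcont i).tendsto _).comp (hx i))
    have h2 := (((hf i).continuous.tendsto _).comp
      ((hy i).update i (tendsto_const_nhds (x := xi)))).add
      (tendsto_const_nhds (x := q i xi))
    rw [Function.update_eq_self] at h1
    refine le_of_tendsto_of_tendsto h1 h2 ?_
    filter_upwards [Filter.eventually_ge_atTop 1] with k hk using (hgs k hk i).2 xi hxi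
end
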